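/- Let P be a finite bounded extremal poset. Then the m-cover poset P^⟨m⟩ is extremal for every integer m > 0 if and only if either (0̂ ∈ M(P) and 1̂ ∈ J(P)) or (0̂ ∉ M(P) and 1̂ ∉ J(P)), i.e., either 0̂ has a unique upper cover and 1̂ has a unique lower cover, or neither of these holds. -/

import Mathlib

/-- The defining shape of elements of the `m`-cover poset: a tuple consisting of
`l₀` copies of `⊥`, then `l₁` copies of `p₁`, then `l₂` copies of `p₂`,
where `p₁ ⋖ p₂` is a cover relation. -/
def IsMCoverTuple {α : Type*} [PartialOrder α] [OrderBot α] (m : ℕ) (f : Fin m → α) : Prop :=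
  ∃ (l₀ l₁ l₂ : ℕ) (p₁ p₂ : α), l₀ + l₁ + l₂ = m ∧ p₁ ⋖ p₂ ∧
    ∀ i : Fin m, f i = if (i : ℕ) < l₀ then ⊥ else if (i : ℕ) < l₀ + l₁ then p₁ else p₂

/-- The `m`-cover poset of `α`, as a subposet of the `m`-fold direct product `Fin m → α`
with the componentwise order. -/
abbrev MCover (α : Type*) [PartialOrder α] [OrderBot α] (m : ℕ) : Type _ :=
  {f : Fin m → α // IsMCoverTuple m f}

/-- A partial order is a lattice: any two elements have a least upper bound and a
greatest lower bound. -/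
def IsLatticeOrder (β : Type*) [PartialOrder β] : Prop :=
  (∀ a b : β, ∃ c, IsLUB {a, b} c) ∧ (∀ a b : β, ∃ c, IsGLB {a, b} c)

/-- An element is join-irreducible: non-minimal with exactly one lower cover. -/
def JoinIrred {β : Type*} [PartialOrder β] (x : β) : Prop :=
  (∃ y, y < x) ∧ ∃! y, y ⋖ x

/-- An element is meet-irreducible: non-maximal with exactly one upper cover. -/
def MeetIrred {β : Type*} [PartialOrder β] (x : β) : Prop :=
  (∃ y, x < y) ∧ ∃! y, x ⋖ y

/-- The length of a bounded poset: the maximum length of a chain from the least element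
to the greatest element. -/
noncomputable def posetLength (β : Type*) [PartialOrder β] : ℕ :=
  sSup {n : ℕ | ∃ f : Fin (n + 1) → β, StrictMono f ∧ IsBot (f 0) ∧ IsTop (f (Fin.last n))}

/-- A bounded poset is extremal if its numbers of join-irreducible and of meet-irreducible
elements both equal its length. -/
def Extremal (β : Type*) [PartialOrder β] : Prop :=
  Nat.card {x : β // JoinIrred x} = posetLength β ∧
  Nat.card {x : β // MeetIrred x} = posetLength β

/-!
A maximal chain of `P` of length `ℓ` yields a chain of length `m * ℓ` in the `m`-cover poset by
advancing one entry at a time, and the sum of the heights of the entries shows that no chain is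
longer. Hence `P^⟨m⟩` has length `m * ℓ`.

Every tuple is the componentwise supremum of tuples `(⊥, …, ⊥, p, …, p)`, so the join-irreducible
tuples have this shape; they are those with `p` join-irreducible, `m * |J(P)|` in total.
Dually, every tuple is the componentwise infimum of tuples `(p, …, p, q, …, q)` with `p ⋖ q`,
`p ≠ ⊥`, and of tuples `(⊥, …, ⊥, ⊤, …, ⊤)`. The former are meet-irreducible if and only if `p` is,
but `(⊥, …, ⊥, ⊤, …, ⊤)`, when it has an entry `⊤`, is meet-irreducible if and only if `⊤` is
*join*-irreducible, because its upper covers replace the last `⊥` by a coatom. So `P^⟨m⟩` has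
`m * |M(P)|` meet-irreducible elements exactly when `m = 1` or `⊥ ∈ M(P) ↔ ⊤ ∈ J(P)`.
-/

section Length

variable {α β : Type*}

theorem posetLength_le_of_strictMono [PartialOrder β] {r : β → ℕ} {n : ℕ} (hr : StrictMono r)
    (hn : ∀ x, r x ≤ n) : posetLength β ≤ n := by
  refine csSup_le' ?_
  rintro k ⟨f, hf, -⟩
  have hinj : Function.Injective fun i => (⟨r (f i), Nat.lt_succ_of_le (hn _)⟩ : Fin (n + 1)) :=
    fun _ _ h => (hr.comp hf).injective (congrArg Fin.val h)
  exact Nat.le_of_succ_le_succ (by simpa using Fintype.card_le_of_injective _ hinj)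

theorem le_posetLength_of_chain [PartialOrder β] [Finite β] {c : ℕ → β} {n : ℕ}
    (hc : ∀ k < n, c k < c (k + 1)) (hbot : IsBot (c 0)) (htop : IsTop (c n)) :
    n ≤ posetLength β := by
  refine le_csSup ⟨Nat.card β, ?_⟩ ⟨fun i => c i, ?_, by simpa, by simpa⟩
  · rintro k ⟨f, hf, -⟩
    have hcard := Nat.card_le_card_of_injective f hf.injective
    rw [Nat.card_fin] at hcard
    exact (Nat.le_succ k).trans hcard
  · exact Fin.strictMono_iff_lt_succ.2 fun i => by simpa using hc i i.2

theorem height_lt_top_of_finite [Preorder α] [Finite α] (x : α) : Order.height x < ⊤ := by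
  have := Fintype.ofFinite α
  exact (Order.height_le fun s _ => Nat.cast_le.2 s.length_lt_card.le).trans_lt
    (ENat.natCast_lt_top _)

/-- The height of an element of a finite poset as a natural number. It is the rank function that
bounds the lengths of chains, both in the poset itself and, summed over the entries of a tuple, in
its `m`-cover posets. -/
noncomputable def natHeight [Preorder α] (x : α) : ℕ :=
  (Order.height x).toNat

theorem coe_natHeight [Preorder α] [Finite α] (x : α) : (natHeight x : ℕ∞) = Order.height x :=
  ENat.natCast_toNat (height_lt_top_of_finite x).ne

theorem natHeight_strictMono [Preorder α] [Finite α] : StrictMono (natHeight (α := α)) := by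
  intro x y hxy
  have hheight := Order.height_strictMono hxy (height_lt_top_of_finite x)
  rw [← coe_natHeight, ← coe_natHeight] at hheight
  exact_mod_cast hheight

theorem exists_ltSeries_natHeight_eq [Preorder α] [Finite α] (x : α) :
    ∃ s : LTSeries α, s.last = x ∧ s.length = natHeight x ∧ ∀ i, natHeight (s i) = i := by
  obtain ⟨s, hlast, hlen⟩ := Order.exists_series_of_height_eq_coe x (coe_natHeight x).symm
  have hheight := Order.height_eq_index_of_length_eq_height_last (p := s)
    (by rw [hlast, hlen, coe_natHeight])
  exact ⟨s, hlast, hlen, fun i => by rw [natHeight, hheight, ENat.toNat_natCast]⟩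

variable (α) in
theorem exists_maximal_chain [PartialOrder α] [BoundedOrder α] [Finite α] :
    ∃ c : ℕ → α, c 0 = ⊥ ∧ (∀ k, natHeight (⊤ : α) ≤ k → c k = ⊤) ∧
      ∀ k < natHeight (⊤ : α), c k ⋖ c (k + 1) := by
  obtain ⟨s, hlast, hlen, hs⟩ := exists_ltSeries_natHeight_eq (⊤ : α)
  have hclamp : ∀ k, natHeight (s (Fin.clamp k s.length)) = min k s.length := fun k => by
    rw [hs, Fin.coe_clamp]
  rw [← hlen]
  refine ⟨fun k => s (Fin.clamp k s.length), ?_, fun k hk => ?_,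
    fun k hk => ⟨?_, fun x hx hx' => ?_⟩⟩
  · by_contra hne
    have hlt := natHeight_strictMono (bot_lt_iff_ne_bot.2 hne)
    rw [hclamp] at hlt
    omega
  · exact (congrArg s (Fin.clamp_eq_last k _ hk)).trans hlast
  · exact s.strictMono (Fin.lt_def.2 (by simpa using hk))
  · have hlt := natHeight_strictMono hx
    have hlt' := natHeight_strictMono hx'
    rw [hclamp] at hlt hlt'
    omega

theorem posetLength_eq_natHeight_top [PartialOrder α] [BoundedOrder α] [Finite α] :
    posetLength α = natHeight (⊤ : α) := by
  obtain ⟨c, hbot, htop, hcov⟩ := exists_maximal_chain α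
  refine le_antisymm (posetLength_le_of_strictMono natHeight_strictMono fun x =>
    natHeight_strictMono.monotone le_top)
    (le_posetLength_of_chain (fun k hk => (hcov k hk).lt) ?_ ?_)
  · rw [hbot]
    exact isBot_bot
  · rw [htop _ le_rfl]
    exact isTop_top

end Length

section Irreducible

variable {β : Type*} [PartialOrder β]

theorem covBy_of_isGreatest_Iio {x y : β} (h : IsGreatest (Set.Iio x) y) : y ⋖ x :=
  ⟨h.1, fun _ hyz hzx => (h.2 hzx).not_gt hyz⟩

theorem covBy_of_isLeast_Ioi {x y : β} (h : IsLeast (Set.Ioi x) y) : x ⋖ y :=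
  ⟨h.1, fun _ hxz hzy => (h.2 hxz).not_gt hzy⟩

theorem joinIrred_iff_exists_isGreatest [IsStronglyCoatomic β] {x : β} :
    JoinIrred x ↔ ∃ y, IsGreatest (Set.Iio x) y := by
  constructor
  · rintro ⟨-, y, hy, huniq⟩
    refine ⟨y, hy.lt, fun z hz => ?_⟩
    obtain ⟨w, hzw, hw⟩ := exists_le_covBy_of_lt hz
    exact huniq w hw ▸ hzw
  · rintro ⟨y, hy⟩
    exact ⟨⟨y, hy.1⟩, y, covBy_of_isGreatest_Iio hy,
      fun z hz => ((hz.eq_or_eq (hy.2 hz.lt) hy.1.le).resolve_right hy.1.ne).symm⟩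

theorem meetIrred_iff_exists_isLeast [IsStronglyAtomic β] {x : β} :
    MeetIrred x ↔ ∃ y, IsLeast (Set.Ioi x) y := by
  constructor
  · rintro ⟨-, y, hy, huniq⟩
    refine ⟨y, hy.lt, fun z hz => ?_⟩
    obtain ⟨w, hw, hwz⟩ := exists_covBy_le_of_lt hz
    exact huniq w hw ▸ hwz
  · rintro ⟨y, hy⟩
    exact ⟨⟨y, hy.1⟩, y, covBy_of_isLeast_Ioi hy,
      fun z hz => ((hz.eq_or_eq hy.1.le (hy.2 hz.lt)).resolve_left hy.1.ne').symm⟩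

theorem JoinIrred.ne_bot [OrderBot β] {x : β} (hx : JoinIrred x) : x ≠ ⊥ := by
  rintro rfl
  exact not_lt_bot hx.1.choose_spec

theorem MeetIrred.ne_top [OrderTop β] {x : β} (hx : MeetIrred x) : x ≠ ⊤ := by
  rintro rfl
  exact not_top_lt hx.1.choose_spec

theorem joinIrred_top_iff_exists_isLeast [BoundedOrder β] [Nontrivial β] [IsStronglyCoatomic β] :
    JoinIrred (⊤ : β) ↔ ∃ y, IsLeast {z : β | z ≠ ⊥ ∧ z ⩿ ⊤} y := by
  rw [joinIrred_iff_exists_isGreatest]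
  constructor
  · rintro ⟨y, hy⟩
    rcases eq_or_ne y ⊥ with rfl | hne
    · refine ⟨⊤, ⟨top_ne_bot, WCovBy.rfl⟩, fun z hz => ?_⟩
      exact (not_lt_top_iff.1 fun hlt => hz.1 (le_bot_iff.1 (hy.2 hlt))).ge
    · refine ⟨y, ⟨hne, (covBy_of_isGreatest_Iio hy).wcovBy⟩, fun z hz => ?_⟩
      rcases wcovBy_iff_covBy_or_eq.1 hz.2 with hcov | rfl
      · exact ((hcov.eq_or_eq (hy.2 hcov.lt) hy.1.le).resolve_right hy.1.ne).le
      · exact le_top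
  · rintro ⟨c, ⟨-, hc⟩, hmin⟩
    have heq {y : β} (hy : y ⋖ ⊤) (hne : y ≠ ⊥) : y = c := by
      have hcy : c ≤ y := hmin ⟨hne, hy.wcovBy⟩
      exact (hc.eq_or_eq hcy hy.lt.le).resolve_right hy.lt.ne
    obtain ⟨r, -, hr⟩ := exists_le_covBy_of_lt (bot_lt_top (α := β))
    refine ⟨r, hr.lt, fun z hz => ?_⟩
    obtain ⟨y, hzy, hy⟩ := exists_le_covBy_of_lt hz
    refine hzy.trans ?_
    rcases eq_or_ne y ⊥ with rfl | hy_ne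
    · exact bot_le
    rcases eq_or_ne r ⊥ with rfl | hr_ne
    · exact ((hr.eq_or_eq bot_le hy.lt.le).resolve_right hy.lt.ne).le
    · exact ((heq hy hy_ne).trans (heq hr hr_ne).symm).le

theorem extremal_of_subsingleton [Subsingleton β] : Extremal β := by
  have hlength : posetLength β = 0 :=
    Nat.le_zero.1
      (posetLength_le_of_strictMono (r := 0) (Subsingleton.strictMono _) fun _ => le_rfl)
  have hJ : IsEmpty {x : β // JoinIrred x} :=
    ⟨fun x => x.2.1.elim fun _ h => h.ne (Subsingleton.elim _ _)⟩
  have hM : IsEmpty {x : β // MeetIrred x} :=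
    ⟨fun x => x.2.1.elim fun _ h => h.ne (Subsingleton.elim _ _)⟩
  simp only [Extremal, hlength, Nat.card_of_isEmpty, and_self]

end Irreducible

namespace IsMCoverTuple

variable {α : Type*} [PartialOrder α] [OrderBot α] {m : ℕ} {f : Fin m → α}

theorem eq_bot_or_wcovBy (hf : IsMCoverTuple m f) {i j : Fin m} (hij : i ≤ j) :
    f i = ⊥ ∨ f i ⩿ f j := by
  obtain ⟨l₀, l₁, l₂, p₁, p₂, -, hcov, hf⟩ := hf
  rw [Fin.le_def] at hij
  rw [hf i, hf j]
  split_ifs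
  all_goals first
    | exact Or.inl rfl
    | exact Or.inr WCovBy.rfl
    | exact Or.inr hcov.wcovBy
    | omega

theorem wcovBy (hf : IsMCoverTuple m f) {i j : Fin m} (hij : i ≤ j) (hi : f i ≠ ⊥) :
    f i ⩿ f j :=
  (hf.eq_bot_or_wcovBy hij).resolve_left hi

theorem monotone (hf : IsMCoverTuple m f) : Monotone f := fun _ _ hij =>
  (hf.eq_bot_or_wcovBy hij).elim (fun h => h ▸ bot_le) WCovBy.le

end IsMCoverTuple

section Staircase

variable {α : Type*}

/-- The tuple whose `i`-th entry is the `(k + i) / m`-th term of the sequence `c`. As `k` grows by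
one, exactly one entry advances along `c`, so the tuples of a saturated chain `c` form a chain
`m` times as long. -/
def staircase (c : ℕ → α) (m k : ℕ) : Fin m → α :=
  fun i => c ((k + i) / m)

theorem staircase_mul (c : ℕ → α) (m k : ℕ) : staircase c m (m * k) = fun _ => c k := by
  funext i
  rw [staircase, Nat.mul_add_div i.pos, Nat.div_eq_of_lt i.2, add_zero]

theorem staircase_lt_staircase_succ [Preorder α] {c : ℕ → α} {m k : ℕ} (hm : 0 < m)
    (hc : Monotone c) (hk : c (k / m) < c (k / m + 1)) :
    staircase c m k < staircase c m (k + 1) := by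
  have hmod := Nat.mod_lt k hm
  have hdiv := Nat.div_add_mod k m
  refine Pi.lt_def.2 ⟨fun i => hc (Nat.div_le_div_right (by omega)), ⟨m - 1 - k % m, by omega⟩, ?_⟩
  have hbefore : (k + (m - 1 - k % m)) / m = k / m := by
    rw [show k + (m - 1 - k % m) = m * (k / m) + (m - 1) by omega, Nat.mul_add_div hm,
      Nat.div_eq_of_lt (show m - 1 < m by omega), add_zero]
  have hafter : (k + 1 + (m - 1 - k % m)) / m = k / m + 1 := by
    rw [show k + 1 + (m - 1 - k % m) = m * (k / m + 1) by rw [mul_add]; omega,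
      Nat.mul_div_cancel_left _ hm]
  simpa only [staircase, hbefore, hafter] using hk

end Staircase

section Membership

variable {α : Type*} [PartialOrder α] [OrderBot α] [Nontrivial α] [IsStronglyCoatomic α] {m : ℕ}

theorem isMCoverTuple_of_wcovBy {f : Fin m → α} {p q : α} (hpq : p ⩿ q) (a b : ℕ)
    (hf : ∀ i : Fin m, f i = if (i : ℕ) < a then ⊥ else if (i : ℕ) < b then p else q) :
    IsMCoverTuple m f := by
  obtain ⟨x, hx⟩ := exists_ne (⊥ : α)
  obtain ⟨w, -, hwx⟩ := exists_le_covBy_of_lt (bot_lt_iff_ne_bot.2 hx)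
  rcases wcovBy_iff_covBy_or_eq.1 hpq with hcov | rfl
  · refine ⟨min a m, min b m - min a m, m - max (min a m) (min b m), p, q, by omega, hcov,
      fun i => ?_⟩
    rw [hf i]
    split_ifs <;> first | rfl | omega
  · rcases eq_or_ne p ⊥ with rfl | hp
    · exact ⟨m, 0, 0, w, x, rfl, hwx, fun i => by simp [hf i]⟩
    · obtain ⟨r, -, hr⟩ := exists_le_covBy_of_lt (bot_lt_iff_ne_bot.2 hp)
      refine ⟨min a m, 0, m - min a m, r, p, by omega, hr, fun i => ?_⟩
      rw [hf i]
      split_ifs <;> first | rfl | omega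

theorem isMCoverTuple_staircase {c : ℕ → α} (hc : ∀ k, c k ⩿ c (k + 1)) (k : ℕ) :
    IsMCoverTuple m (staircase c m k) := by
  refine isMCoverTuple_of_wcovBy (hc (k / m)) 0 (m - k % m) fun i => ?_
  have hmod := Nat.mod_lt k i.pos
  have hcarry : (k + i) / m = k / m + if (i : ℕ) < m - k % m then 0 else 1 := by
    rw [Nat.add_div i.pos, Nat.div_eq_of_lt i.2, Nat.mod_eq_of_lt i.2]
    split_ifs <;> omega
  rw [staircase, hcarry]
  split_ifs <;> first | rfl | omega

end Membership

section MCoverLength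

variable {α : Type*} [PartialOrder α] [BoundedOrder α] [Finite α] {m : ℕ}

theorem posetLength_mCover_le : posetLength (MCover α m) ≤ m * posetLength α := by
  rw [posetLength_eq_natHeight_top (α := α)]
  refine posetLength_le_of_strictMono (r := fun f => ∑ i, natHeight (f.1 i)) (fun f g hfg => ?_)
    fun f => ?_
  · obtain ⟨hle, i, hi⟩ := Pi.lt_def.1 (Subtype.coe_lt_coe.2 hfg)
    exact Finset.sum_lt_sum (fun j _ => natHeight_strictMono.monotone (hle j))
      ⟨i, Finset.mem_univ i, natHeight_strictMono hi⟩
  · refine (Finset.sum_le_card_nsmul _ _ _ fun i _ =>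
      natHeight_strictMono.monotone (le_top (a := f.1 i))).trans_eq ?_
    rw [Finset.card_univ, Fintype.card_fin, smul_eq_mul]

theorem le_posetLength_mCover [Nontrivial α] (hm : 0 < m) :
    m * posetLength α ≤ posetLength (MCover α m) := by
  obtain ⟨c, hbot, htop, hcov⟩ := exists_maximal_chain α
  rw [posetLength_eq_natHeight_top]
  have hwcov : ∀ k, c k ⩿ c (k + 1) := fun k => by
    rcases lt_or_ge k (natHeight (⊤ : α)) with hk | hk
    · exact (hcov k hk).wcovBy
    · exact (htop k hk).trans (htop (k + 1) (by omega)).symm ▸ WCovBy.rfl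
  refine le_posetLength_of_chain
    (c := fun k => ⟨staircase c m k, isMCoverTuple_staircase hwcov k⟩) (fun k hk => ?_)
    (fun f i => ?_) fun f i => ?_
  · exact staircase_lt_staircase_succ hm (monotone_nat_of_le_succ fun k => (hwcov k).le)
      (hcov _ (Nat.div_lt_of_lt_mul hk)).lt
  · have hzero : staircase c m 0 i = ⊥ := by rw [← mul_zero m, staircase_mul, hbot]
    exact hzero.trans_le bot_le
  · have hlast : staircase c m (m * natHeight (⊤ : α)) i = ⊤ := by
      rw [staircase_mul, htop _ le_rfl]
    exact le_top.trans_eq hlast.symm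

theorem posetLength_mCover [Nontrivial α] (hm : 0 < m) :
    posetLength (MCover α m) = m * posetLength α :=
  posetLength_mCover_le.antisymm (le_posetLength_mCover hm)

end MCoverLength

section Pivot

variable {ι α : Type*} [LinearOrder ι] {a b : ι} {x y z p q p' q' : α}

/-- The family taking the value `x` before the index `a`, the value `y` at `a` and the value `z`
after `a`. The irreducible elements of `m`-cover posets, and their covers, have this shape. -/
def pivot (a : ι) (x y z : α) : ι → α :=
  fun i => if i < a then x else if i = a then y else z

theorem pivot_of_lt {i : ι} (h : i < a) : pivot a x y z i = x :=
  if_pos h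

theorem pivot_self : pivot a x y z a = y := by
  rw [pivot, if_neg (lt_irrefl a), if_pos rfl]

theorem pivot_of_gt {i : ι} (h : a < i) : pivot a x y z i = z := by
  rw [pivot, if_neg h.not_gt, if_neg h.ne']

theorem pivot_of_isMax (ha : IsMax a) : pivot a x y z = pivot a x y p := by
  funext i
  simp only [pivot]
  split_ifs with hlt heq
  · rfl
  · rfl
  · exact absurd ((not_lt.1 hlt).lt_of_ne' heq) ha.not_lt

theorem forall_pivot_iff {r : ι → α → Prop} :
    (∀ i, r i (pivot a x y z i)) ↔ (∀ i < a, r i x) ∧ r a y ∧ ∀ i > a, r i z := by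
  refine ⟨fun h => ⟨fun i hi => ?_, ?_, fun i hi => ?_⟩, fun ⟨hlt, hself, hgt⟩ i => ?_⟩
  · simpa only [pivot_of_lt hi] using h i
  · simpa only [pivot_self] using h a
  · simpa only [pivot_of_gt hi] using h i
  · rcases lt_trichotomy i a with hi | rfl | hi
    · simpa only [pivot_of_lt hi] using hlt i hi
    · simpa only [pivot_self] using hself
    · simpa only [pivot_of_gt hi] using hgt i hi

theorem pivot_le_iff [LE α] {g : ι → α} :
    pivot a x y z ≤ g ↔ (∀ i < a, x ≤ g i) ∧ y ≤ g a ∧ ∀ i > a, z ≤ g i :=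
  forall_pivot_iff (r := fun i w => w ≤ g i)

theorem le_pivot_iff [LE α] {g : ι → α} :
    g ≤ pivot a x y z ↔ (∀ i < a, g i ≤ x) ∧ g a ≤ y ∧ ∀ i > a, g i ≤ z :=
  forall_pivot_iff (r := fun i w => g i ≤ w)

theorem pivot_lt_of_lt_self [Preorder α] {g : ι → α} (hlt : ∀ i < a, x ≤ g i) (hself : y < g a)
    (hgt : ∀ i > a, z ≤ g i) : pivot a x y z < g :=
  Pi.lt_def.2 ⟨pivot_le_iff.2 ⟨hlt, hself.le, hgt⟩, a, pivot_self.trans_lt hself⟩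

theorem lt_apply_of_pivot_lt [PartialOrder α] {g : ι → α} (hg : Monotone g)
    (hlt : pivot a p p q < g) (hle : g a = p → ∀ i > a, g i ≤ q) : p < g a := by
  refine (pivot_le_iff.1 hlt.le).2.1.lt_of_ne fun heq => hlt.not_ge ?_
  exact le_pivot_iff.2 ⟨fun i hi => heq ▸ hg hi.le, heq.ge, hle heq.symm⟩

theorem pivot_const_left_inj (hp : x ≠ p) (hq : x ≠ q) (h : pivot a x p p = pivot b x q q) :
    a = b ∧ p = q := by
  rcases lt_trichotomy a b with hab | rfl | hab
  · exact absurd (by simpa only [pivot_self, pivot_of_lt hab] using congrFun h a) hp.symm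
  · exact ⟨rfl, by simpa only [pivot_self] using congrFun h a⟩
  · exact absurd (by simpa only [pivot_self, pivot_of_lt hab] using congrFun h b) hq

theorem pivot_const_right_inj (hpq : p ≠ q) (hpq' : p' ≠ q')
    (h : pivot a p p q = pivot b p' p' q') : a = b ∧ p = p' := by
  have ha := congrFun h a
  have hb := congrFun h b
  rcases lt_trichotomy a b with hab | rfl | hab
  · rw [pivot_self, pivot_of_lt hab] at ha
    rw [pivot_self, pivot_of_gt hab] at hb
    exact absurd (ha.trans hb.symm) hpq
  · exact ⟨rfl, by simpa only [pivot_self] using ha⟩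
  · rw [pivot_self, pivot_of_gt hab] at ha
    rw [pivot_self, pivot_of_lt hab] at hb
    exact absurd (hb.symm.trans ha) hpq'

end Pivot

section PivotMembership

variable {α : Type*} [PartialOrder α] [OrderBot α] [Nontrivial α] [IsStronglyCoatomic α]
  {m : ℕ} {p q : α}

theorem isMCoverTuple_pivot_bot (a : Fin m) (hpq : p ⩿ q) : IsMCoverTuple m (pivot a ⊥ p q) := by
  refine isMCoverTuple_of_wcovBy hpq a (a + 1) fun i => ?_
  simp only [pivot, Fin.lt_def, Fin.ext_iff]
  split_ifs <;> first | rfl | omega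

theorem isMCoverTuple_pivot_left (a : Fin m) (hpq : p ⩿ q) : IsMCoverTuple m (pivot a p p q) := by
  refine isMCoverTuple_of_wcovBy hpq 0 (a + 1) fun i => ?_
  simp only [pivot, Fin.lt_def, Fin.ext_iff]
  split_ifs <;> first | rfl | omega

theorem isMCoverTuple_pivot_right (a : Fin m) (hpq : p ⩿ q) : IsMCoverTuple m (pivot a p q q) := by
  refine isMCoverTuple_of_wcovBy hpq 0 a fun i => ?_
  simp only [pivot, Fin.lt_def, Fin.ext_iff]
  split_ifs <;> first | rfl | omega

theorem isMCoverTuple_pivot_bot_bot (a : Fin m) (q : α) : IsMCoverTuple m (pivot a ⊥ ⊥ q) := by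
  refine isMCoverTuple_of_wcovBy (WCovBy.refl q) (a + 1) 0 fun i => ?_
  simp only [pivot, Fin.lt_def, Fin.ext_iff]
  split_ifs <;> first | rfl | omega

end PivotMembership

section JoinPivot

variable {α : Type*} [PartialOrder α] [OrderBot α] [Nontrivial α] [Finite α] {m : ℕ}
  {a : Fin m} {p : α}

/-- The tuple `(⊥, …, ⊥, p, …, p)` whose entries equal `p` from the index `a` on. Every element of
the `m`-cover poset is a componentwise supremum of such tuples. -/
def joinPivot (a : Fin m) (p : α) : MCover α m :=
  ⟨pivot a ⊥ p p, isMCoverTuple_pivot_bot a WCovBy.rfl⟩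

theorem joinPivot_le_iff {f : MCover α m} : joinPivot a p ≤ f ↔ p ≤ f.1 a :=
  pivot_le_iff.trans ⟨fun h => h.2.1,
    fun h => ⟨fun _ _ => bot_le, h, fun _ hi => h.trans (f.2.monotone hi.le)⟩⟩

theorem apply_lt_of_lt_joinPivot {f : MCover α m} (hf : f < joinPivot a p) : f.1 a < p :=
  ((hf.le a).trans_eq pivot_self).lt_of_not_ge fun h => hf.not_ge (joinPivot_le_iff.2 h)

theorem pivot_lt_joinPivot {z : α} (hz : z ⋖ p) :
    (⟨pivot a ⊥ z p, isMCoverTuple_pivot_bot a hz.wcovBy⟩ : MCover α m) < joinPivot a p := by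
  refine Subtype.coe_lt_coe.1 (pivot_lt_of_lt_self (fun _ _ => bot_le)
    (hz.lt.trans_eq pivot_self.symm) fun _ hi => (pivot_of_gt hi).ge)

theorem joinIrred_joinPivot_iff : JoinIrred (joinPivot a p) ↔ JoinIrred p := by
  simp only [joinIrred_iff_exists_isGreatest]
  constructor
  · rintro ⟨c, hc, hmax⟩
    refine ⟨c.1 a, apply_lt_of_lt_joinPivot hc, fun y hy => ?_⟩
    obtain ⟨z, hyz, hz⟩ := exists_le_covBy_of_lt hy
    exact hyz.trans (pivot_self.ge.trans (hmax (pivot_lt_joinPivot hz) a))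
  · rintro ⟨c, hc⟩
    refine ⟨_, pivot_lt_joinPivot (covBy_of_isGreatest_Iio hc), fun f hf => ?_⟩
    have hle := le_pivot_iff.1 (show f.1 ≤ pivot a ⊥ p p from hf.le)
    exact le_pivot_iff.2 ⟨hle.1, hc.2 (apply_lt_of_lt_joinPivot hf), hle.2.2⟩

theorem exists_eq_joinPivot_of_joinIrred {f : MCover α m} (hf : JoinIrred f) :
    ∃ a p, f = joinPivot a p := by
  obtain ⟨c, hc, hmax⟩ := joinIrred_iff_exists_isGreatest.1 hf
  by_contra! hne
  have hle : ∀ i, joinPivot i (f.1 i) ≤ c := fun i =>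
    hmax ((joinPivot_le_iff.2 le_rfl).lt_of_ne' (hne i _))
  have hfc : f.1 ≤ c.1 := fun i => joinPivot_le_iff.1 (hle i)
  exact hc.not_ge hfc

theorem card_joinIrred_mCover :
    Nat.card {f : MCover α m // JoinIrred f} = m * Nat.card {p : α // JoinIrred p} := by
  let e (x : Fin m × {p : α // JoinIrred p}) : {f : MCover α m // JoinIrred f} :=
    ⟨joinPivot x.1 x.2, joinIrred_joinPivot_iff.2 x.2.2⟩
  have hinj : Function.Injective e := fun x y hxy => by
    have hpivot := congrArg Subtype.val (congrArg Subtype.val hxy)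
    obtain ⟨ha, hp⟩ := pivot_const_left_inj x.2.2.ne_bot.symm y.2.2.ne_bot.symm hpivot
    exact Prod.ext ha (Subtype.ext hp)
  have hsurj : Function.Surjective e := fun ⟨f, hf⟩ => by
    obtain ⟨a, p, rfl⟩ := exists_eq_joinPivot_of_joinIrred hf
    exact ⟨⟨a, p, joinIrred_joinPivot_iff.1 hf⟩, rfl⟩
  rw [← Nat.card_congr (Equiv.ofBijective e ⟨hinj, hsurj⟩), Nat.card_prod, Nat.card_fin]

end JoinPivot

section MeetPivot

variable {α : Type*} [PartialOrder α] [BoundedOrder α]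

/-- The pairs `p < q` for which the tuples `(p, …, p, q, …, q)` are used to write every element of
an `m`-cover poset as a componentwise infimum. For `p = ⊥` only the largest such tuples are kept,
namely those with `q = ⊤`. -/
def MeetStep (p q : α) : Prop :=
  (p = ⊥ ∧ q = ⊤) ∨ (p ≠ ⊥ ∧ p ⋖ q)

variable {p q : α}

theorem MeetStep.lt [Nontrivial α] : MeetStep p q → p < q := by
  rintro (⟨rfl, rfl⟩ | ⟨-, hpq⟩)
  · exact bot_lt_top
  · exact hpq.lt

theorem exists_meetStep [Finite α] (hp : p ≠ ⊤) : ∃ q, MeetStep p q := by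
  rcases eq_or_ne p ⊥ with hbot | hbot
  · exact ⟨⊤, Or.inl ⟨hbot, rfl⟩⟩
  · obtain ⟨q, hq, -⟩ := exists_covBy_le_of_lt hp.lt_top
    exact ⟨q, Or.inr ⟨hbot, hq⟩⟩

/-- The elements `p` for which a tuple `(p, …, p, q, …, q)` with `MeetStep p q` and at least one
entry `q` is meet-irreducible. For `p = ⊥` the relevant tuples are `(⊥, …, ⊥, ⊤, …, ⊤)`, and they
are governed by the coatoms of the poset. -/
def IsInnerMeetPivot (p : α) : Prop :=
  (p = ⊥ ∧ JoinIrred (⊤ : α)) ∨ (p ≠ ⊥ ∧ MeetIrred p)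

theorem isInnerMeetPivot_bot_iff : IsInnerMeetPivot (⊥ : α) ↔ JoinIrred (⊤ : α) := by
  simp only [IsInnerMeetPivot, true_and, ne_eq, not_true_eq_false, false_and, or_false]

theorem isInnerMeetPivot_iff_of_ne_bot (hp : p ≠ ⊥) : IsInnerMeetPivot p ↔ MeetIrred p := by
  simp only [IsInnerMeetPivot, hp, false_and, ne_eq, not_false_eq_true, true_and, false_or]

variable {m : ℕ} {a : Fin m}

/-- The pairs `(a, p)` for which the tuple `(p, …, p, q, …, q)` with `MeetStep p q` and last entry
`p` at the index `a` is meet-irreducible. -/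
def IsMeetPivot (a : Fin m) (p : α) : Prop :=
  (IsMax a ∧ MeetIrred p) ∨ (¬ IsMax a ∧ IsInnerMeetPivot p)

theorem isMeetPivot_iff_of_isMax (ha : IsMax a) : IsMeetPivot a p ↔ MeetIrred p := by
  simp only [IsMeetPivot, ha, true_and, not_true_eq_false, false_and, or_false]

theorem isMeetPivot_iff_of_not_isMax (ha : ¬ IsMax a) :
    IsMeetPivot a p ↔ IsInnerMeetPivot p := by
  simp only [IsMeetPivot, ha, false_and, not_false_eq_true, true_and, false_or]

theorem IsMeetPivot.existsUnique_meetStep (h : IsMeetPivot a p) : ∃! q, MeetStep p q := by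
  by_cases hp : p = ⊥
  · exact ⟨⊤, Or.inl ⟨hp, rfl⟩, fun q hq => hq.elim And.right fun h => absurd hp h.1⟩
  · have hmeet : MeetIrred p :=
      h.elim And.right fun h => (isInnerMeetPivot_iff_of_ne_bot hp).1 h.2
    obtain ⟨q, hq, huniq⟩ := hmeet.2
    exact ⟨q, Or.inr ⟨hp, hq⟩, fun r hr => hr.elim (fun h => absurd h.1 hp) fun h => huniq r h.2⟩

variable [Finite α] [Nontrivial α]

theorem MeetStep.isMCoverTuple_pivot (a : Fin m) (h : MeetStep p q) :
    IsMCoverTuple m (pivot a p p q) := by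
  obtain ⟨rfl, -⟩ | ⟨-, hpq⟩ := h
  · exact isMCoverTuple_pivot_bot_bot a q
  · exact isMCoverTuple_pivot_left a hpq.wcovBy

/-- The tuple `(p, …, p, q, …, q)` whose entries equal `p` up to the index `a`. Every element of
the `m`-cover poset is a componentwise infimum of such tuples. -/
def meetPivot (a : Fin m) (h : MeetStep p q) : MCover α m :=
  ⟨pivot a p p q, h.isMCoverTuple_pivot a⟩

theorem exists_meetStep_forall_apply_le {f : MCover α m} (ha : f.1 a ≠ ⊤) :
    ∃ q, MeetStep (f.1 a) q ∧ ∀ i, f.1 i ≤ q := by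
  rcases eq_or_ne (f.1 a) ⊥ with hbot | hbot
  · exact ⟨⊤, Or.inl ⟨hbot, rfl⟩, fun _ => le_top⟩
  have hle_last : ∀ i : Fin m, i ≤ ⟨m - 1, Nat.sub_one_lt a.pos.ne'⟩ := fun i =>
    Fin.le_def.2 (Nat.le_sub_one_of_lt i.2)
  rcases wcovBy_iff_covBy_or_eq.1 (f.2.wcovBy (hle_last a) hbot) with hcov | heq
  · exact ⟨_, Or.inr ⟨hbot, hcov⟩, fun i => f.2.monotone (hle_last i)⟩
  · obtain ⟨q, hq⟩ := exists_meetStep ha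
    exact ⟨q, hq, fun i => (f.2.monotone (hle_last i)).trans (heq ▸ hq.lt.le)⟩

theorem exists_eq_meetPivot_of_meetIrred {f : MCover α m} (hf : MeetIrred f) :
    ∃ (a : Fin m) (p q : α) (h : MeetStep p q), f = meetPivot a h := by
  obtain ⟨c, hc, hmin⟩ := meetIrred_iff_exists_isLeast.1 hf
  obtain ⟨-, a, ha⟩ := Pi.lt_def.1 (Subtype.coe_lt_coe.2 hc)
  obtain ⟨q, hq, hle⟩ := exists_meetStep_forall_apply_le ha.ne_top
  refine ⟨a, f.1 a, q, hq, ?_⟩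
  by_contra hne
  have hfpivot : f ≤ meetPivot a hq :=
    Subtype.coe_le_coe.1
      (le_pivot_iff.2 ⟨fun i hi => f.2.monotone hi.le, le_rfl, fun i _ => hle i⟩)
  have hca : c.1 a ≤ f.1 a := (le_pivot_iff.1 (hmin (hfpivot.lt_of_ne hne))).2.1
  exact ha.not_ge hca

theorem isLeast_Ioi_pivot (hq : IsLeast (Set.Ioi p) q) (ha : p ≠ ⊥ ∨ IsMax a) :
    IsLeast (Set.Ioi (⟨pivot a p p q,
        isMCoverTuple_pivot_left a (covBy_of_isLeast_Ioi hq).wcovBy⟩ : MCover α m))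
      ⟨pivot a p q q, isMCoverTuple_pivot_right a (covBy_of_isLeast_Ioi hq).wcovBy⟩ := by
  have hlt : pivot a p p q < pivot a p q q :=
    pivot_lt_of_lt_self (fun i hi => (pivot_of_lt hi).ge) (hq.1.trans_eq pivot_self.symm)
      fun i hi => (pivot_of_gt hi).ge
  refine ⟨hlt, fun g hg => ?_⟩
  have hle : pivot a p p q ≤ g.1 := le_of_lt hg
  have hga : p < g.1 a := lt_apply_of_pivot_lt g.2.monotone hg fun hga i hi => by
    have hp : p ≠ ⊥ := ha.resolve_right hi.not_isMax
    have hpi : p ⩿ g.1 i := hga ▸ g.2.wcovBy hi.le (hga ▸ hp)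
    rcases hpi.le.eq_or_lt with heq | hpi_lt
    · exact heq ▸ hq.1.le
    · exact (hpi.eq_or_eq hq.1.le (hq.2 hpi_lt)).elim (fun h => absurd h hq.1.ne') ge_of_eq
  exact pivot_le_iff.2 ⟨(pivot_le_iff.1 hle).1, hq.2 hga,
    fun i hi => (hq.2 hga).trans (g.2.monotone hi.le)⟩

theorem meetIrred_of_meetIrred_pivot (hpq : p ⋖ q)
    (h : MeetIrred (⟨pivot a p p q, isMCoverTuple_pivot_left a hpq.wcovBy⟩ : MCover α m)) :
    MeetIrred p := by
  obtain ⟨c, hc, hmin⟩ := meetIrred_iff_exists_isLeast.1 h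
  have hle_pivot {y z : α} (hy : p < y) (hyz : y ⩿ z) (hqz : q ≤ z) : c.1 ≤ pivot a y y z := by
    have hlt : pivot a p p q < pivot a y y z :=
      pivot_lt_of_lt_self (fun i hi => hy.le.trans_eq (pivot_of_lt hi).symm)
        (hy.trans_eq pivot_self.symm) fun i hi => hqz.trans_eq (pivot_of_gt hi).symm
    exact hmin (a := ⟨_, isMCoverTuple_pivot_left a hyz⟩) hlt
  have hca : c.1 a = q := by
    obtain ⟨-, hle_self, hle_gt⟩ := le_pivot_iff.1 (hle_pivot hpq.lt WCovBy.rfl le_rfl)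
    have hlt : p < c.1 a := lt_apply_of_pivot_lt c.2.monotone hc fun _ => hle_gt
    exact (hpq.eq_or_eq hlt.le hle_self).resolve_left hlt.ne'
  refine meetIrred_iff_exists_isLeast.2 ⟨q, hpq.lt, fun y hy => ?_⟩
  by_contra hqy
  -- For `w` maximal with `p < w` and `¬ q ≤ w`, and `w ⋖ z`, maximality gives `q ≤ z`, so `c` lies
  -- below `(w, …, w, z, …, z)`; comparing entries at `a` yields `q ≤ w`.
  obtain ⟨w, -, hw⟩ := (Set.toFinite {w | p < w ∧ ¬ q ≤ w}).exists_le_maximal ⟨hy, hqy⟩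
  have hw_ne_top : w ≠ ⊤ := fun h => hw.prop.2 (h ▸ le_top)
  obtain ⟨z, hwz, -⟩ := exists_covBy_le_of_lt hw_ne_top.lt_top
  have hqz : q ≤ z := by
    by_contra hqz
    exact hw.not_prop_of_gt hwz.lt ⟨hw.prop.1.trans hwz.lt, hqz⟩
  exact hw.prop.2 (hca ▸ (le_pivot_iff.1 (hle_pivot hw.prop.1 hwz.wcovBy hqz)).2.1)

theorem meetIrred_pivot_iff (hpq : p ⋖ q) (ha : p ≠ ⊥ ∨ IsMax a) :
    MeetIrred (⟨pivot a p p q, isMCoverTuple_pivot_left a hpq.wcovBy⟩ : MCover α m) ↔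
      MeetIrred p := by
  refine ⟨meetIrred_of_meetIrred_pivot hpq, fun hp => ?_⟩
  obtain ⟨r, hr⟩ := meetIrred_iff_exists_isLeast.1 hp
  obtain rfl : q = r := hp.2.unique hpq (covBy_of_isLeast_Ioi hr)
  exact meetIrred_iff_exists_isLeast.2 ⟨_, isLeast_Ioi_pivot hr ha⟩

theorem meetIrred_pivot_bot_top_iff (ha : ¬ IsMax a) :
    MeetIrred (⟨pivot a ⊥ ⊥ ⊤, isMCoverTuple_pivot_bot_bot a ⊤⟩ : MCover α m) ↔
      JoinIrred (⊤ : α) := by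
  have hpivot_lt {z : α} (hz : z ≠ ⊥) : pivot a ⊥ ⊥ ⊤ < pivot a ⊥ z ⊤ :=
    pivot_lt_of_lt_self (fun _ _ => bot_le) (hz.bot_lt.trans_eq pivot_self.symm)
      fun _ hi => (pivot_of_gt hi).ge
  have hself_ne_bot {g : MCover α m} (hg : pivot a ⊥ ⊥ ⊤ < g.1) : g.1 a ≠ ⊥ :=
    (lt_apply_of_pivot_lt g.2.monotone hg fun _ _ _ => le_top).ne'
  rw [meetIrred_iff_exists_isLeast, joinIrred_top_iff_exists_isLeast]
  constructor
  · rintro ⟨c, hc, hmin⟩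
    obtain ⟨j, hj⟩ := not_isMax_iff.1 ha
    have hle : pivot a ⊥ ⊥ ⊤ ≤ c.1 := le_of_lt hc
    have hcj : c.1 j = ⊤ := top_le_iff.1 ((pivot_le_iff.1 hle).2.2 j hj)
    refine ⟨c.1 a, ⟨hself_ne_bot hc, hcj ▸ c.2.wcovBy hj.le (hself_ne_bot hc)⟩, ?_⟩
    rintro z ⟨hz, hz_top⟩
    have hcz : c ≤ ⟨pivot a ⊥ z ⊤, isMCoverTuple_pivot_bot a hz_top⟩ := hmin (hpivot_lt hz)
    exact (le_pivot_iff.1 hcz).2.1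
  · rintro ⟨z, ⟨hz, hz_top⟩, hmin⟩
    refine ⟨⟨pivot a ⊥ z ⊤, isMCoverTuple_pivot_bot a hz_top⟩, hpivot_lt hz, fun g hg => ?_⟩
    have hle : pivot a ⊥ ⊥ ⊤ ≤ g.1 := le_of_lt hg
    obtain ⟨hlt, -, hgt⟩ := pivot_le_iff.1 hle
    obtain ⟨j, hj⟩ := not_isMax_iff.1 ha
    have hgj : g.1 j = ⊤ := top_le_iff.1 (hgt j hj)
    have hself : z ≤ g.1 a :=
      hmin ⟨hself_ne_bot hg, hgj ▸ g.2.wcovBy hj.le (hself_ne_bot hg)⟩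
    exact pivot_le_iff.2 ⟨hlt, hself, hgt⟩

theorem meetIrred_meetPivot_iff (h : MeetStep p q) :
    MeetIrred (meetPivot a h) ↔ IsMeetPivot a p := by
  by_cases ha : IsMax a
  · rw [isMeetPivot_iff_of_isMax ha]
    rcases h with ⟨rfl, rfl⟩ | ⟨-, hpq⟩
    · obtain ⟨r, hr, -⟩ := exists_covBy_le_of_lt (bot_lt_top (α := α))
      rw [← meetIrred_pivot_iff hr (Or.inr ha)]
      exact Iff.of_eq (congrArg MeetIrred (Subtype.ext (pivot_of_isMax ha)))
    · exact meetIrred_pivot_iff hpq (Or.inr ha)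
  · rw [isMeetPivot_iff_of_not_isMax ha]
    rcases h with ⟨rfl, rfl⟩ | ⟨hp, hpq⟩
    · rw [isInnerMeetPivot_bot_iff]
      exact meetIrred_pivot_bot_top_iff ha
    · rw [isInnerMeetPivot_iff_of_ne_bot hp]
      exact meetIrred_pivot_iff hpq (Or.inl hp)

theorem card_meetIrred_mCover_eq_card_isMeetPivot :
    Nat.card {f : MCover α m // MeetIrred f} =
      Nat.card {x : Fin m × α // IsMeetPivot x.1 x.2} := by
  choose! next hnext huniq using
    fun (x : Fin m × α) (hx : IsMeetPivot x.1 x.2) => hx.existsUnique_meetStep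
  let e (x : {x : Fin m × α // IsMeetPivot x.1 x.2}) : {f : MCover α m // MeetIrred f} :=
    ⟨meetPivot x.1.1 (hnext x.1 x.2), (meetIrred_meetPivot_iff _).2 x.2⟩
  have hinj : Function.Injective e := fun x y hxy => by
    have hpivot := congrArg Subtype.val (congrArg Subtype.val hxy)
    obtain ⟨ha, hp⟩ :=
      pivot_const_right_inj (hnext x.1 x.2).lt.ne (hnext y.1 y.2).lt.ne hpivot
    exact Subtype.ext (Prod.ext ha hp)
  have hsurj : Function.Surjective e := fun ⟨f, hf⟩ => by
    obtain ⟨a, p, q, h, rfl⟩ := exists_eq_meetPivot_of_meetIrred hf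
    have hap := (meetIrred_meetPivot_iff h).1 hf
    obtain rfl := huniq (a, p) hap q h
    exact ⟨⟨(a, p), hap⟩, rfl⟩
  exact (Nat.card_congr (Equiv.ofBijective e ⟨hinj, hsurj⟩)).symm

theorem card_meetIrred_mCover_succ (n : ℕ) :
    Nat.card {f : MCover α (n + 1) // MeetIrred f} =
      n * Nat.card {p : α // IsInnerMeetPivot p} + Nat.card {p : α // MeetIrred p} := by
  have hcastSucc (i : Fin n) (p : α) : IsMeetPivot i.castSucc p ↔ IsInnerMeetPivot p :=
    isMeetPivot_iff_of_not_isMax (Fin.castSucc_lt_last i).not_isMax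
  have hlast (p : α) : IsMeetPivot (Fin.last n) p ↔ MeetIrred p :=
    isMeetPivot_iff_of_isMax isMax_top
  rw [card_meetIrred_mCover_eq_card_isMeetPivot,
    Nat.card_congr (Equiv.subtypeProdEquivSigmaSubtype IsMeetPivot), Nat.card_sigma,
    Fin.sum_univ_castSucc]
  simp only [hcastSucc, hlast, Finset.sum_const, Finset.card_univ, Fintype.card_fin, smul_eq_mul]

end MeetPivot

section Extremality

open Classical in
theorem ncard_eq_ncard_iff_of_sdiff_singleton_eq {α : Type*} [Finite α] {s t : Set α} {b : α}
    (h : s \ {b} = t \ {b}) : s.ncard = t.ncard ↔ (b ∈ s ↔ b ∈ t) := by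
  have hncard (u : Set α) : u.ncard = (u \ {b}).ncard + if b ∈ u then 1 else 0 := by
    split_ifs with hb
    · exact (Set.ncard_sdiff_singleton_add_one hb).symm
    · rw [Set.sdiff_singleton_eq_self hb, add_zero]
  rw [hncard s, hncard t, h, Nat.add_left_cancel_iff]
  by_cases hs : b ∈ s <;> by_cases ht : b ∈ t <;> simp [hs, ht]

variable {α : Type*} [PartialOrder α] [BoundedOrder α] [Finite α]

theorem card_isInnerMeetPivot_eq_iff :
    Nat.card {p : α // IsInnerMeetPivot p} = Nat.card {p : α // MeetIrred p} ↔
      (JoinIrred (⊤ : α) ↔ MeetIrred (⊥ : α)) := by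
  have hdiff : {p : α | IsInnerMeetPivot p} \ {⊥} = {p : α | MeetIrred p} \ {⊥} :=
    Set.ext fun _ => and_congr_left isInnerMeetPivot_iff_of_ne_bot
  rw [← isInnerMeetPivot_bot_iff]
  exact ncard_eq_ncard_iff_of_sdiff_singleton_eq hdiff

theorem extremal_mCover_succ_iff [Nontrivial α] (n : ℕ) :
    Extremal (MCover α (n + 1)) ↔
      Nat.card {p : α // JoinIrred p} = posetLength α ∧
        n * Nat.card {p : α // IsInnerMeetPivot p} + Nat.card {p : α // MeetIrred p} =
          (n + 1) * posetLength α := by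
  rw [Extremal, card_joinIrred_mCover, card_meetIrred_mCover_succ, posetLength_mCover n.succ_pos,
    Nat.mul_right_inj n.succ_ne_zero]

end Extremality

theorem stmt_9_general {α : Type*} [PartialOrder α] [BoundedOrder α] [Finite α] :
    (∀ m : ℕ, 0 < m → Extremal (MCover α m)) ↔
      Extremal α ∧ ((MeetIrred (⊥ : α) ∧ JoinIrred (⊤ : α)) ∨
        (¬ MeetIrred (⊥ : α) ∧ ¬ JoinIrred (⊤ : α))) := by
  rcases subsingleton_or_nontrivial α with _ | _
  · refine iff_of_true (fun m _ => extremal_of_subsingleton)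
      ⟨extremal_of_subsingleton, Or.inr ⟨fun h => ?_, fun h => ?_⟩⟩
    · exact h.ne_top (Subsingleton.elim _ _)
    · exact h.ne_bot (Subsingleton.elim _ _)
  rw [← iff_iff_and_or_not_and_not, iff_comm (a := MeetIrred ⊥),
    ← card_isInnerMeetPivot_eq_iff]
  constructor
  · intro h
    obtain ⟨hJ, hM⟩ := (extremal_mCover_succ_iff 0).1 (h 1 one_pos)
    have hM₂ := ((extremal_mCover_succ_iff 1).1 (h 2 two_pos)).2
    exact ⟨⟨hJ, by omega⟩, by omega⟩
  · rintro ⟨⟨hJ, hM⟩, hN⟩ (_ | n) hm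
    · exact absurd hm (lt_irrefl 0)
    · exact (extremal_mCover_succ_iff n).2 ⟨hJ, by rw [hN, hM, Nat.succ_mul]⟩

/-- For an extremal bounded poset `P`, all m-cover posets are extremal iff
`⊥ ∈ M(P) ∧ ⊤ ∈ J(P)` or `⊥ ∉ M(P) ∧ ⊤ ∉ J(P)`. -/
theorem stmt_9 {α : Type*} [Fintype α] [PartialOrder α] [BoundedOrder α]
    (hext : Extremal α) :
    (∀ m : ℕ, 0 < m → Extremal (MCover α m)) ↔
      ((MeetIrred (⊥ : α) ∧ JoinIrred (⊤ : α)) ∨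
        (¬ MeetIrred (⊥ : α) ∧ ¬ JoinIrred (⊤ : α))) :=
  stmt_9_general.trans (and_iff_right hext)
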